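/- arXiv:2309.13727 — 8 statements merged into one kernel-verified Lean document; each statement's English description precedes it below -/
import Mathlib

section
/- In any nondegenerate triangle, the distance from the centroid X2 to the Gergonne point X7 equals twice the distance from X2 to the mittenpunkt X9, i.e., dist(X2, X7) = 2·dist(X2, X9). -/
/-- The point with normalized barycentric coordinates `(x : y : z)`
with respect to the triangle `A B C`. -/
noncomputable def bary (A B C : EuclideanSpace ℝ (Fin 2)) (x y z : ℝ) :
    EuclideanSpace ℝ (Fin 2) :=
  (x + y + z)⁻¹ • (x • A + y • B + z • C)

/-- The triangle center with barycentric coordinates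
`(f a b c : f b c a : f c a b)` where `a, b, c` are the side lengths. -/
noncomputable def tcenter (f : ℝ → ℝ → ℝ → ℝ) (A B C : EuclideanSpace ℝ (Fin 2)) :
    EuclideanSpace ℝ (Fin 2) :=
  bary A B C (f (dist B C) (dist C A) (dist A B))
    (f (dist C A) (dist A B) (dist B C))
    (f (dist A B) (dist B C) (dist C A))

theorem stmt_4 (A B C : EuclideanSpace ℝ (Fin 2))
    (h : AffineIndependent ℝ ![A, B, C]) :
    dist (tcenter (fun a b c => (1:Real)) A B C) (tcenter (fun a b c => (a + b - c)*(a - b + c)) A B C) = 2 * dist (tcenter (fun a b c => (1:Real)) A B C) (tcenter (fun a b c => a*(b + c - a)) A B C) := by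
  have hAB : 0 < dist A B := dist_pos.2 fun e => by
    have := h.injective.ne (show (0 : Fin 3) ≠ 1 by decide)
    simp at this; exact this e
  have hBC : 0 < dist B C := dist_pos.2 fun e => by
    have := h.injective.ne (show (1 : Fin 3) ≠ 2 by decide)
    simp at this; exact this e
  have hCA : 0 < dist C A := dist_pos.2 fun e => by
    have := h.injective.ne (show (2 : Fin 3) ≠ 0 by decide)
    simp at this; exact this e
  have t1 : dist B C ≤ dist C A + dist A B := by
    have := dist_triangle B A C
    rw [dist_comm B A, dist_comm A C] at this; linarith
  have t2 : dist C A ≤ dist A B + dist B C := by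
    have := dist_triangle C B A
    rw [dist_comm C B, dist_comm B A] at this; linarith
  have t3 : dist A B ≤ dist B C + dist C A := by
    have := dist_triangle A C B
    rw [dist_comm A C, dist_comm C B] at this; linarith
  unfold tcenter bary
  simp only []
  generalize dist A B = c at *
  generalize dist B C = a at *
  generalize dist C A = b at *
  have hS : 2*(a*b+b*c+c*a) - a^2-b^2-c^2 ≠ 0 := by
    intro h0
    have p1 := mul_nonneg (sub_nonneg.2 t1) (sub_nonneg.2 t2)
    have p2 := mul_nonneg (sub_nonneg.2 t2) (sub_nonneg.2 t3)
    have p3 := mul_nonneg (sub_nonneg.2 t3) (sub_nonneg.2 t1)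
    have q1 : (b + c - a) * (c + a - b) = 0 := by nlinarith
    have q2 : (c + a - b) * (a + b - c) = 0 := by nlinarith
    have q3 : (a + b - c) * (b + c - a) = 0 := by nlinarith
    rcases mul_eq_zero.1 q1 with u | u <;> rcases mul_eq_zero.1 q2 with v | v <;>
      rcases mul_eq_zero.1 q3 with w | w <;> linarith
  have e1 : (a + b - c) * (a - b + c) + (b + c - a) * (b - c + a) + (c + a - b) * (c - a + b)
      = 2*(a*b+b*c+c*a) - a^2-b^2-c^2 := by ring
  have e2 : a * (b + c - a) + b * (c + a - b) + c * (a + b - c)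
      = 2*(a*b+b*c+c*a) - a^2-b^2-c^2 := by ring
  generalize hSd : 2*(a*b+b*c+c*a) - a^2-b^2-c^2 = S at *
  rw [e1, e2, dist_eq_norm, dist_eq_norm]
  have h2 : (2 : ℝ) = ‖(-2 : ℝ)‖ := by norm_num
  conv_rhs => rw [h2, ← norm_smul]
  congr 1
  ext i
  simp only [PiLp.sub_apply, PiLp.smul_apply, PiLp.add_apply, smul_eq_mul]
  field_simp
  rw [← hSd]
  ring
end

section
/- In any nondegenerate triangle, the distance from the symmedian point X6 to the incenter X1 satisfies dist(X6, X1) ≤ (2 − √3)·dist(X6, X3), where X3 is the circumcenter. -/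
lemma core_te (m t e : ℝ) (hm : m ^ 2 = 4 * m - 1) (hm0 : 0.26794 ≤ m)
    (ht0 : 0 < t) (ht1 : t ≤ 1) (he : 0 ≤ e) (he1 : 4 * e ≤ t ^ 2) (he2 : e ≤ (1 - t) ^ 2) :
    0 ≤ m ^ 2 * t * (1 - e) * (4 * (1 - t ^ 2) ^ 2 + 8 * e * (7 - t ^ 2) + 4 * e ^ 2)
      - (t * (1 - t) ^ 2 * (2 - t) + e * ((3 * t - 2) * (4 - t)) - 8 * e ^ 2)
        * ((t ^ 2 - 4 * e) * (2 - t)) := by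
  have hk : 0.0717 ≤ m ^ 2 := by nlinarith
  have hbase : 0 ≤ m ^ 2 * t * (4 * (1 - t ^ 2) ^ 2) - t * (1 - t) ^ 2 * (2 - t) * (t ^ 2 * (2 - t)) := by
    have h1 : 2 * m * (1 + t) - t * (2 - t) = (t - (1 - m)) ^ 2 := by linear_combination -hm
    have h2 : 0 ≤ 2 * m * (1 + t) + t * (2 - t) := by
      have : 0 ≤ 2 - t := by linarith
      positivity
    have h3 : m ^ 2 * t * (4 * (1 - t ^ 2) ^ 2) - t * (1 - t) ^ 2 * (2 - t) * (t ^ 2 * (2 - t))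
        = t * (1 - t) ^ 2 * (2 * m * (1 + t) - t * (2 - t)) * (2 * m * (1 + t) + t * (2 - t)) := by
      ring
    rw [h3, h1]
    positivity
  have h2t : 0 ≤ 2 - t := by linarith
  have hT : 0 ≤ (t ^ 2 - 4 * e) * (2 - t) := mul_nonneg (by linarith) h2t
  have he4 : e ≤ 1 / 4 := by nlinarith
  have ht7 : 0 ≤ 7 - t ^ 2 := by nlinarith
  have hD0 : 0 ≤ t * (1 - t) ^ 2 * (2 - t) := by positivity
  have hmt : 0 ≤ m ^ 2 * t := by positivity
  -- main part
  have hmain : 0 ≤ m ^ 2 * t * (8 * (1 - e) * (7 - t ^ 2) - 4 * (1 - t ^ 2) ^ 2)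
      - (3 * t - 2) * (4 - t) * (t ^ 2 * (2 - t)) ∨ 3 * t - 2 ≤ 0 := by
    by_cases h : 3 * t - 2 ≤ 0
    · exact Or.inr h
    · left
      push Not at h
      have hq : t * (2 - t) ≤ 1 - e := by nlinarith
      have h5 : 8 * (t * (2 - t)) * (7 - t ^ 2) - 4 * (1 - t ^ 2) ^ 2
          ≤ 8 * (1 - e) * (7 - t ^ 2) - 4 * (1 - t ^ 2) ^ 2 := by
        nlinarith [mul_nonneg (sub_nonneg.2 hq) ht7]
      have h6 : 0 ≤ 8 * (t * (2 - t)) * (7 - t ^ 2) - 4 * (1 - t ^ 2) ^ 2 := by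
        have : 4/5 ≤ t * (2 - t) := by nlinarith
        have h7 : (1 - t ^ 2) ^ 2 ≤ 1 := by nlinarith
        nlinarith
      have h8 : (3 * t - 2) * (4 - t) * (t * (2 - t))
          ≤ 0.0717 * (8 * (t * (2 - t)) * (7 - t ^ 2) - 4 * (1 - t ^ 2) ^ 2) := by
        obtain ⟨x, rfl⟩ : ∃ x, t = 1 - x := ⟨1 - t, by ring⟩
        have hx : 0 ≤ x := by linarith
        have hx1 : 0 ≤ 1 / 3 - x := by linarith
        nlinarith [mul_nonneg hx hx1, mul_nonneg (mul_nonneg hx hx) hx1,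
          mul_nonneg (mul_nonneg (mul_nonneg hx hx) hx) hx1]
      have h9 := mul_le_mul_of_nonneg_right hk h6
      have h10 := mul_le_mul_of_nonneg_left h5 (sq_nonneg m)
      nlinarith [mul_nonneg ht0.le (sub_nonneg.2 ((h8.trans h9).trans h10))]
  have hpos : 0 ≤ m ^ 2 * t * (1 - e) * (4 * e ^ 2) := by
    have : 0 ≤ 1 - e := by linarith
    positivity
  have hE := mul_nonneg (sq_nonneg e) hT
  have hF := mul_nonneg hD0 (mul_nonneg he h2t)
  by_cases hc : 3 * t - 2 ≤ 0
  · have h4 : 0 ≤ (2 - 3 * t) * (4 - t) := mul_nonneg (by linarith) (by linarith)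
    have h11 : 0 ≤ e * (8 * (1 - e) * (7 - t ^ 2) - 4 * (1 - t ^ 2) ^ 2) := by
      apply mul_nonneg he
      have ht2 : 0 ≤ t ^ 2 := sq_nonneg t
      have ht21 : t ^ 2 ≤ 1 := by nlinarith only [ht0, ht1]
      have h7 : (1 - t ^ 2) ^ 2 ≤ 1 := by nlinarith only [ht2, ht21]
      nlinarith only [h7, ht21, mul_nonneg (sub_nonneg.2 he4) ht7]
    have hG := mul_nonneg hmt h11
    have hH := mul_nonneg (mul_nonneg he h4) hT
    linear_combination hbase + hG + hpos + 4 * hF + hH + 8 * hE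
  · have h := hmain.resolve_right hc
    have h4 : 0 ≤ (3 * t - 2) * (4 - t) := mul_nonneg (by linarith) (by linarith)
    have hG := mul_nonneg he h
    have hH := mul_nonneg (mul_nonneg he h4) (mul_nonneg he h2t)
    linear_combination hbase + hG + hpos + 4 * hF + 4 * hH + 8 * hE

/-- the symmetric polynomial -/
def HH (m a b c : ℝ) : ℝ :=
  m ^ 2 * (a * b * c) * ((a ^ 2 + b ^ 2 + c ^ 2) ^ 2
      - 3 * (a + b + c) * ((b + c - a) * (c + a - b) * (a + b - c)))
    - (2 * (a * b + b * c + c * a) * (a ^ 2 + b ^ 2 + c ^ 2) - (a ^ 2 + b ^ 2 + c ^ 2) ^ 2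
      - 3 * (a * b * c) * (a + b + c)) * ((b + c - a) * (c + a - b) * (a + b - c))

lemma HH_min (m a b c : ℝ) (hm : m ^ 2 = 4 * m - 1) (hm0 : 0.26794 ≤ m)
    (ha : 0 < a) (hb : 0 < b) (hc : 0 < c) (h1 : a ≤ b + c) (h2 : b ≤ c + a)
    (hca : c ≤ a) (hcb : c ≤ b) : 0 ≤ HH m a b c := by
  obtain ⟨w, hw⟩ : ∃ w, w = (a + b) / 2 := ⟨_, rfl⟩
  have hw0 : 0 < w := by linarith
  obtain ⟨t, ht⟩ : ∃ t, t = c / w := ⟨_, rfl⟩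
  obtain ⟨d, hd⟩ : ∃ d, d = (a - b) / 2 / w := ⟨_, rfl⟩
  have ec : c = w * t := by rw [ht]; field_simp
  have ed : w * d = (a - b) / 2 := by rw [hd]; field_simp
  have ea : a = w * (1 + d) := by linarith
  have eb : b = w * (1 - d) := by linarith
  have k1 : t ≤ 1 + d := by rw [ec, ea] at hca; exact le_of_mul_le_mul_left hca hw0
  have k2 : t ≤ 1 - d := by rw [ec, eb] at hcb; exact le_of_mul_le_mul_left hcb hw0
  have k3 : 2 * d ≤ t := le_of_mul_le_mul_left (by linarith) hw0
  have k4 : -(2 * d) ≤ t := le_of_mul_le_mul_left (by linarith) hw0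
  have ht0 : 0 < t := by rw [ht]; positivity
  have key := core_te m t (d ^ 2) hm hm0 ht0 (by linarith) (sq_nonneg d)
    (by nlinarith) (by nlinarith)
  have : HH m a b c = w ^ 7 * (m ^ 2 * t * (1 - d ^ 2) * (4 * (1 - t ^ 2) ^ 2 + 8 * d ^ 2 * (7 - t ^ 2) + 4 * (d ^ 2) ^ 2)
      - (t * (1 - t) ^ 2 * (2 - t) + d ^ 2 * ((3 * t - 2) * (4 - t)) - 8 * (d ^ 2) ^ 2)
        * ((t ^ 2 - 4 * d ^ 2) * (2 - t))) := by
    rw [ea, eb, ec, HH]; ring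
  rw [this]
  positivity

lemma HH_nonneg (m a b c : ℝ) (hm : m ^ 2 = 4 * m - 1) (hm0 : 0.26794 ≤ m)
    (ha : 0 < a) (hb : 0 < b) (hc : 0 < c) (h1 : a ≤ b + c) (h2 : b ≤ c + a) (h3 : c ≤ a + b) :
    0 ≤ HH m a b c := by
  rcases le_total a b with hab | hab <;> rcases le_total b c with hbc | hbc <;>
    rcases le_total c a with hca | hca
  all_goals first
    | exact HH_min m a b c hm hm0 ha hb hc h1 h2 (by linarith) (by linarith)
    | (have e : HH m a b c = HH m b c a := by unfold HH; ring
       rw [e]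
       exact HH_min m b c a hm hm0 hb hc ha (by linarith) (by linarith) (by linarith) (by linarith))
    | (have e : HH m a b c = HH m c a b := by unfold HH; ring
       rw [e]
       exact HH_min m c a b hm hm0 hc ha hb (by linarith) (by linarith) (by linarith) (by linarith))

lemma dist_bary (A B C : EuclideanSpace ℝ (Fin 2)) (x y z x' y' z' : ℝ)
    (h : x + y + z ≠ 0) (h' : x' + y' + z' ≠ 0) :
    dist (bary A B C x y z) (bary A B C x' y' z') ^ 2 =
      -(dist B C ^ 2 * ((y / (x + y + z) - y' / (x' + y' + z')) * (z / (x + y + z) - z' / (x' + y' + z')))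
      + dist C A ^ 2 * ((z / (x + y + z) - z' / (x' + y' + z')) * (x / (x + y + z) - x' / (x' + y' + z')))
      + dist A B ^ 2 * ((x / (x + y + z) - x' / (x' + y' + z')) * (y / (x + y + z) - y' / (x' + y' + z')))) := by
  obtain ⟨u, hu⟩ : ∃ u, u = x / (x + y + z) - x' / (x' + y' + z') := ⟨_, rfl⟩
  obtain ⟨v, hv⟩ : ∃ v, v = y / (x + y + z) - y' / (x' + y' + z') := ⟨_, rfl⟩
  obtain ⟨w, hw⟩ : ∃ w, w = z / (x + y + z) - z' / (x' + y' + z') := ⟨_, rfl⟩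
  have hs : w = - u - v := by
    rw [hu, hv, hw]; field_simp; ring
  have hc : ∀ i, bary A B C x y z i - bary A B C x' y' z' i = u * A i + v * B i + w * C i := by
    intro i
    simp only [bary, PiLp.smul_apply, PiLp.add_apply, smul_eq_mul, hu, hv, hw]
    ring
  rw [← hu, ← hv, ← hw]
  simp only [EuclideanSpace.dist_eq, Fin.sum_univ_two, Real.dist_eq, sq_abs, hc]
  rw [Real.sq_sqrt (by positivity), Real.sq_sqrt (by positivity), Real.sq_sqrt (by positivity),
    Real.sq_sqrt (by positivity), hs]
  ring

theorem stmt_5 (A B C : EuclideanSpace ℝ (Fin 2))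
    (h : AffineIndependent ℝ ![A, B, C]) :
    dist (tcenter (fun a b c => a^2) A B C) (tcenter (fun a b c => a) A B C) ≤ (2 - Real.sqrt 3) * dist (tcenter (fun a b c => a^2) A B C) (tcenter (fun a b c => a^2*(a^2 - b^2 - c^2)) A B C) := by
  have hnc : ¬ Collinear ℝ {A, B, C} := affineIndependent_iff_not_collinear_set.1 h
  have hAB : A ≠ B := by
    rintro rfl; exact hnc (by simpa using collinear_pair ℝ A C)
  have hBC : B ≠ C := by
    rintro rfl; exact hnc (by simpa using collinear_pair ℝ A B)
  have hCA : C ≠ A := by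
    rintro rfl; exact hnc (by rw [Set.insert_comm]; simpa using collinear_pair ℝ B C)
  have t1 : dist B C < dist C A + dist A B := by
    rcases (dist_triangle B A C).lt_or_eq with h1 | h1
    · rw [dist_comm C A, dist_comm A B]; linarith
    · exact absurd (dist_add_dist_eq_iff.1 h1.symm).collinear (by rwa [Set.insert_comm])
  have t2 : dist C A < dist A B + dist B C := by
    rcases (dist_triangle A B C).lt_or_eq with h1 | h1
    · rw [dist_comm C A]; linarith
    · exact absurd (dist_add_dist_eq_iff.1 h1.symm).collinear hnc
  have t3 : dist A B < dist B C + dist C A := by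
    rcases (dist_triangle A C B).lt_or_eq with h1 | h1
    · rw [dist_comm C A, dist_comm B C]; linarith
    · exact absurd (dist_add_dist_eq_iff.1 h1.symm).collinear (by rwa [Set.pair_comm])
  have a0 : 0 < dist B C := dist_pos.2 hBC
  have b0 : 0 < dist C A := dist_pos.2 hCA
  have c0 : 0 < dist A B := dist_pos.2 hAB
  have s3 : Real.sqrt 3 ^ 2 = 3 := Real.sq_sqrt (by norm_num)
  have s3' : Real.sqrt 3 ≤ 1.73206 := by
    rw [Real.sqrt_le_left (by norm_num)]; norm_num
  have hm : (2 - Real.sqrt 3) ^ 2 = 4 * (2 - Real.sqrt 3) - 1 := by linear_combination s3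
  have hm0 : 0.26794 ≤ 2 - Real.sqrt 3 := by linarith
  generalize 2 - Real.sqrt 3 = m at hm hm0 ⊢
  have hm1 : 0 ≤ m := by linarith
  refine (sq_le_sq₀ dist_nonneg (by positivity)).1 ?_
  rw [mul_pow]
  simp only [tcenter]
  have key := HH_nonneg m (dist B C) (dist C A) (dist A B) hm hm0 a0 b0 c0 (by linarith) (by linarith) (by linarith)
  have e1 : 0 < dist C A + dist A B - dist B C := by linarith
  have e2 : 0 < dist A B + dist B C - dist C A := by linarith
  have e3 : 0 < dist B C + dist C A - dist A B := by linarith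
  have hS : ∀ a b c : ℝ, a^2*(a^2 - b^2 - c^2) + b^2*(b^2 - c^2 - a^2) + c^2*(c^2 - a^2 - b^2)
      = -((a + b + c) * ((b + c - a) * (c + a - b) * (a + b - c))) := by intros; ring
  rw [dist_bary _ _ _ _ _ _ _ _ _ (by positivity) (by positivity),
    dist_bary _ _ _ _ _ _ _ _ _ (by positivity) (by rw [hS]; apply neg_ne_zero.2; positivity), hS]
  generalize dist B C = a at *
  generalize dist C A = b at *
  generalize dist A B = c at *
  obtain ⟨T, hT⟩ : ∃ T, T = (b + c - a) * (c + a - b) * (a + b - c) := ⟨_, rfl⟩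
  have hT0 : 0 < T := by rw [hT]; positivity
  have f1 : -(a ^ 2 * ((b ^ 2 / (a ^ 2 + b ^ 2 + c ^ 2) - b / (a + b + c)) * (c ^ 2 / (a ^ 2 + b ^ 2 + c ^ 2) - c / (a + b + c))) + b ^ 2 * ((c ^ 2 / (a ^ 2 + b ^ 2 + c ^ 2) - c / (a + b + c)) * (a ^ 2 / (a ^ 2 + b ^ 2 + c ^ 2) - a / (a + b + c))) + c ^ 2 * ((a ^ 2 / (a ^ 2 + b ^ 2 + c ^ 2) - a / (a + b + c)) * (b ^ 2 / (a ^ 2 + b ^ 2 + c ^ 2) - b / (a + b + c)))) = a * b * c * (2 * (a * b + b * c + c * a) * (a ^ 2 + b ^ 2 + c ^ 2) - (a ^ 2 + b ^ 2 + c ^ 2) ^ 2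
      - 3 * (a * b * c) * (a + b + c)) / ((a + b + c) * (a ^ 2 + b ^ 2 + c ^ 2) ^ 2) := by
    field_simp
    ring
  rw [f1, ← hT]
  have f2 : -(a ^ 2 * ((b ^ 2 / (a ^ 2 + b ^ 2 + c ^ 2) - b ^ 2 * (b ^ 2 - c ^ 2 - a ^ 2) / -((a + b + c) * T)) * (c ^ 2 / (a ^ 2 + b ^ 2 + c ^ 2) - c ^ 2 * (c ^ 2 - a ^ 2 - b ^ 2) / -((a + b + c) * T))) + b ^ 2 * ((c ^ 2 / (a ^ 2 + b ^ 2 + c ^ 2) - c ^ 2 * (c ^ 2 - a ^ 2 - b ^ 2) / -((a + b + c) * T)) * (a ^ 2 / (a ^ 2 + b ^ 2 + c ^ 2) - a ^ 2 * (a ^ 2 - b ^ 2 - c ^ 2) / -((a + b + c) * T))) + c ^ 2 * ((a ^ 2 / (a ^ 2 + b ^ 2 + c ^ 2) - a ^ 2 * (a ^ 2 - b ^ 2 - c ^ 2) / -((a + b + c) * T)) * (b ^ 2 / (a ^ 2 + b ^ 2 + c ^ 2) - b ^ 2 * (b ^ 2 - c ^ 2 - a ^ 2) / -((a + b + c) *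 T))))
     = (a * b * c) ^ 2 * ((a ^ 2 + b ^ 2 + c ^ 2) ^ 2 - 3 * (a + b + c) * T) / ((a + b + c) * T * (a ^ 2 + b ^ 2 + c ^ 2) ^ 2) := by
    field_simp
    rw [hT]
    ring
  rw [f2]
  rw [← sub_nonneg]
  rw [HH, ← hT] at key
  have f3 : ∀ D E : ℝ, m ^ 2 * ((a * b * c) ^ 2 * E / ((a + b + c) * T * (a ^ 2 + b ^ 2 + c ^ 2) ^ 2)) - a * b * c * D / ((a + b + c) * (a ^ 2 + b ^ 2 + c ^ 2) ^ 2)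
      = (a * b * c) / ((a + b + c) * T * (a ^ 2 + b ^ 2 + c ^ 2) ^ 2) * (m ^ 2 * (a * b * c) * E - D * T) := by
    intro D E
    field_simp
  rw [f3]
  exact mul_nonneg (by positivity) key
end

section
/- In any nondegenerate triangle, the distance from the incenter X1 to the centroid X2 satisfies dist(X1, X2) ≤ (2/3)·dist(X1, X3), where X3 is the circumcenter. -/
lemma bary_dist_sq (A B C : EuclideanSpace ℝ (Fin 2)) (x y z x' y' z' : ℝ)
    (h : x + y + z ≠ 0) (h' : x' + y' + z' ≠ 0) :
    dist (bary A B C x y z) (bary A B C x' y' z') ^ 2 =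
      -((dist B C) ^ 2 * (y / (x + y + z) - y' / (x' + y' + z'))
          * (z / (x + y + z) - z' / (x' + y' + z'))
        + (dist C A) ^ 2 * (z / (x + y + z) - z' / (x' + y' + z'))
          * (x / (x + y + z) - x' / (x' + y' + z'))
        + (dist A B) ^ 2 * (x / (x + y + z) - x' / (x' + y' + z'))
          * (y / (x + y + z) - y' / (x' + y' + z'))) := by
  have d2 : ∀ P Q : EuclideanSpace ℝ (Fin 2),
      dist P Q ^ 2 = (P 0 - Q 0) ^ 2 + (P 1 - Q 1) ^ 2 := by
    intro P Q
    rw [EuclideanSpace.dist_sq_eq, Fin.sum_univ_two, Real.dist_eq, Real.dist_eq, sq_abs, sq_abs]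
  rw [d2, d2, d2, d2]
  have e : z / (x + y + z) = 1 - x / (x + y + z) - y / (x + y + z) := by
    field_simp; ring
  have e' : z' / (x' + y' + z') = 1 - x' / (x' + y' + z') - y' / (x' + y' + z') := by
    field_simp; ring
  have k : ∀ i, bary A B C x y z i =
      x / (x + y + z) * A i + y / (x + y + z) * B i + z / (x + y + z) * C i := by
    intro i; simp [bary]; ring
  have k' : ∀ i, bary A B C x' y' z' i =
      x' / (x' + y' + z') * A i + y' / (x' + y' + z') * B i + z' / (x' + y' + z') * C i := by
    intro i; simp [bary]; ring
  rw [k, k, k', k', e, e']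
  ring

lemma poly_ineq (x y z : ℝ) (hx : 0 < x) (hy : 0 < y) (hz : 0 < z) :
    4 * (x + y + z) ^ 3 * (x * y * z) + 20 * (x * y * z) ^ 2 ≤
      ((y + z) * (z + x) * (x + y)) ^ 2 + 8 * ((y + z) * (z + x) * (x + y)) * (x * y * z) := by
  have h1 := sq_nonneg ((x - y) * (y - z) * (z - x))
  have h2 : 0 ≤ (x * y + y * z + z * x) *
      ((x * y - y * z) ^ 2 + (y * z - z * x) ^ 2 + (z * x - x * y) ^ 2) := by positivity
  nlinarith

lemma strict_tri (A B C : EuclideanSpace ℝ (Fin 2))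
    (h : ¬ Collinear ℝ {A, B, C}) : dist A C < dist A B + dist B C := by
  refine lt_of_le_of_ne (dist_triangle _ _ _) fun e => h ?_
  exact (dist_add_dist_eq_iff.1 e.symm).collinear

theorem stmt_6 (A B C : EuclideanSpace ℝ (Fin 2))
    (h : AffineIndependent ℝ ![A, B, C]) :
    dist (tcenter (fun a b c => a) A B C) (tcenter (fun a b c => (1:Real)) A B C) ≤ (2/3) * dist (tcenter (fun a b c => a) A B C) (tcenter (fun a b c => a^2*(a^2 - b^2 - c^2)) A B C) := by
  have h0 : ¬ Collinear ℝ {A, B, C} := by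
    rwa [← affineIndependent_iff_not_collinear_set]
  have t1 := strict_tri A B C h0
  have t2 := strict_tri B C A (by
    convert h0 using 2; ext t; simp only [Set.mem_insert_iff, Set.mem_singleton_iff]; tauto)
  have t3 := strict_tri C A B (by
    convert h0 using 2; ext t; simp only [Set.mem_insert_iff, Set.mem_singleton_iff]; tauto)
  rw [dist_comm A C] at t1
  rw [dist_comm B A] at t2
  rw [dist_comm C B] at t3
  have key : dist (tcenter (fun a b c => a) A B C) (tcenter (fun a b c => (1:Real)) A B C) ^ 2 ≤
      ((2/3) * dist (tcenter (fun a b c => a) A B C)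
        (tcenter (fun a b c => a^2*(a^2 - b^2 - c^2)) A B C)) ^ 2 := by
    rw [mul_pow]
    unfold tcenter
    obtain ⟨x, hx⟩ : ∃ x, x = (dist C A + dist A B - dist B C) / 2 := ⟨_, rfl⟩
    obtain ⟨y, hy⟩ : ∃ y, y = (dist A B + dist B C - dist C A) / 2 := ⟨_, rfl⟩
    obtain ⟨z, hz⟩ : ∃ z, z = (dist B C + dist C A - dist A B) / 2 := ⟨_, rfl⟩
    have ea : dist B C = y + z := by linarith
    have eb : dist C A = z + x := by linarith
    have ec : dist A B = x + y := by linarith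
    have px : 0 < x := by linarith
    have py : 0 < y := by linarith
    have pz : 0 < z := by linarith
    have s1 : (y + z) + (z + x) + (x + y) = 2 * (x + y + z) := by ring
    have s3 : (y + z)^2*((y + z)^2 - (z + x)^2 - (x + y)^2)
        + (z + x)^2*((z + x)^2 - (x + y)^2 - (y + z)^2)
        + (x + y)^2*((x + y)^2 - (y + z)^2 - (z + x)^2) = -(16 * (x + y + z) * (x * y * z)) := by
      ring
    have n1 : 2 * (x + y + z) ≠ 0 := by positivity
    have n3 : -(16 * (x + y + z) * (x * y * z)) ≠ 0 := neg_ne_zero.2 (by positivity)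
    rw [bary_dist_sq, bary_dist_sq]
    · simp only [ea, eb, ec]
      rw [s1, s3]
      have hp : 0 < x + y + z := by positivity
      have P := poly_ineq x y z px py pz
      rw [← sub_nonneg]
      have Q : 0 ≤ (((y + z) * (z + x) * (x + y)) ^ 2
        + 8 * ((y + z) * (z + x) * (x + y)) * (x * y * z)
        - (4 * (x + y + z) ^ 3 * (x * y * z) + 20 * (x * y * z) ^ 2)) /
          (36 * (x + y + z) * (x * y * z)) :=
        div_nonneg (by linarith) (by positivity)
      refine Q.trans_eq ?_
      field_simp
      ring
    all_goals simp only [ea, eb, ec]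
    · rwa [s1]
    · rwa [s3]
    · rwa [s1]
    · norm_num
  exact le_of_sq_le_sq key (by positivity)
end

section
/- In any nondegenerate triangle, the distance from the incenter X1 to the centroid X2 satisfies dist(X1, X2) ≥ (2√2/3)·dist(X1, X6), where X6 is the symmedian point. -/
def N7 (a b c u v w : ℝ) : ℝ := -(a^2*v*w + b^2*w*u + c^2*u*v)

def F7 (a b c : ℝ) : ℝ :=
  (a^2+b^2+c^2)^2 * N7 a b c (3*a-(a+b+c)) (3*b-(a+b+c)) (3*c-(a+b+c))
   - 8 * N7 a b c (a*(a^2+b^2+c^2-a*(a+b+c))) (b*(a^2+b^2+c^2-b*(a+b+c)))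
      (c*(a^2+b^2+c^2-c*(a+b+c)))

lemma bracket7 (x p q : ℝ) (hx : 0 < x) (hp : 0 ≤ p) :
    0 ≤ (3*x+2*p)*(p*(2*x^2-p^2))^2
      + (6*x^3+6*x^2*p-9*x*p^2-7*p^3)*(p*(2*x^2-p^2))*q
      + (12*x^5+132*x^4*p+404*x^3*p^2+616*x^2*p^3+500*x*p^4+197*p^5)*q^2 := by
  have h1 : 0 ≤ 4*(3*x+2*p)*(12*x^5+132*x^4*p+404*x^3*p^2+616*x^2*p^3+500*x*p^4+197*p^5)
      - (6*x^3+6*x^2*p-9*x*p^2-7*p^3)^2 := by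
    ring_nf
    positivity
  have h2 : 0 < 4*(3*x+2*p) := by positivity
  refine nonneg_of_mul_nonneg_right (?_ : 0 ≤ 4*(3*x+2*p) * _) h2
  have h3 := mul_nonneg h1 (sq_nonneg q)
  have h4 := sq_nonneg (2*(3*x+2*p)*(p*(2*x^2-p^2)) + (6*x^3+6*x^2*p-9*x*p^2-7*p^3)*q)
  nlinarith [h3, h4]

lemma F7_ravi (x p q : ℝ) (hx : 0 ≤ x) (hp : 0 ≤ p) (hq : 0 ≤ q) :
    0 ≤ F7 (2*x+2*p+q) (2*x+p+q) (2*x+p) := by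
  have h1 : 0 ≤ 16 * (x * ((3*x+2*p)*(p*(2*x^2-p^2))^2
      + (6*x^3+6*x^2*p-9*x*p^2-7*p^3)*(p*(2*x^2-p^2))*q
      + (12*x^5+132*x^4*p+404*x^3*p^2+616*x^2*p^3+500*x*p^4+197*p^5)*q^2)) := by
    rcases hx.eq_or_lt with h | h
    · rw [← h]; simp
    · exact mul_nonneg (by norm_num) (mul_nonneg hx (bracket7 x p q h hp))
  have h2 : 0 ≤ 1024*x^5*q^3 + 6656*x^4*p^1*q^3 + 2048*x^4*q^4 + 15104*x^3*p^2*q^3 + 8896*x^3*p^1*q^4 + 1920*x^3*q^5 + 15760*x^2*p^3*q^3 + 13376*x^2*p^2*q^4 + 5520*x^2*p^1*q^5 + 880*x^2*q^6 + 7600*x^1*p^4*q^3 + 8368*x^1*p^3*q^4 + 5008*x^1*p^2*q^5 + 1552*x^1*p^1*q^6 + 192*x^1*q^7 + 448*p^6*q^2 + 1344*p^5*q^3 + 1840*p^4*q^4 + 1440*p^3*q^5 + 656*p^2*q^6 + 160*p^1*q^7 + 16*q^8 := by positivity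
  have e : F7 (2*x+2*p+q) (2*x+p+q) (2*x+p) = 16 * (x * ((3*x+2*p)*(p*(2*x^2-p^2))^2
      + (6*x^3+6*x^2*p-9*x*p^2-7*p^3)*(p*(2*x^2-p^2))*q
      + (12*x^5+132*x^4*p+404*x^3*p^2+616*x^2*p^3+500*x*p^4+197*p^5)*q^2)) + (1024*x^5*q^3 + 6656*x^4*p^1*q^3 + 2048*x^4*q^4 + 15104*x^3*p^2*q^3 + 8896*x^3*p^1*q^4 + 1920*x^3*q^5 + 15760*x^2*p^3*q^3 + 13376*x^2*p^2*q^4 + 5520*x^2*p^1*q^5 + 880*x^2*q^6 + 7600*x^1*p^4*q^3 + 8368*x^1*p^3*q^4 + 5008*x^1*p^2*q^5 + 1552*x^1*p^1*q^6 + 192*x^1*q^7 + 448*p^6*q^2 + 1344*p^5*q^3 + 1840*p^4*q^4 + 1440*p^3*q^5 + 656*p^2*q^6 + 160*p^1*q^7 + 16*q^8) := by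
    unfold F7 N7; ring
  rw [e]; exact add_nonneg h1 h2

lemma F7_ord (a b c : ℝ) (h1 : c ≤ b) (h2 : b ≤ a) (h3 : a ≤ b + c) : 0 ≤ F7 a b c := by
  have := F7_ravi ((b+c-a)/2) (a-b) (b-c) (by linarith) (by linarith) (by linarith)
  convert this using 2 <;> ring

lemma F7_swap (a b c : ℝ) : F7 a b c = F7 b a c := by unfold F7 N7; ring

lemma F7_swap' (a b c : ℝ) : F7 a b c = F7 a c b := by unfold F7 N7; ring

lemma F7_nonneg (a b c : ℝ) (h1 : a ≤ b + c) (h2 : b ≤ c + a) (h3 : c ≤ a + b) :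
    0 ≤ F7 a b c := by
  rcases le_total a b with h | h <;> rcases le_total b c with h' | h' <;>
    rcases le_total a c with h'' | h''
  · rw [F7_swap, F7_swap', F7_swap]; exact F7_ord _ _ _ (by linarith) (by linarith) (by linarith)
  · rw [F7_swap, F7_swap', F7_swap]; exact F7_ord _ _ _ (by linarith) (by linarith) (by linarith)
  · rw [F7_swap, F7_swap']; exact F7_ord _ _ _ (by linarith) (by linarith) (by linarith)
  · rw [F7_swap]; exact F7_ord _ _ _ (by linarith) (by linarith) (by linarith)
  · rw [F7_swap', F7_swap]; exact F7_ord _ _ _ (by linarith) (by linarith) (by linarith)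
  · rw [F7_swap']; exact F7_ord _ _ _ (by linarith) (by linarith) (by linarith)
  · exact F7_ord _ _ _ (by linarith) (by linarith) (by linarith)
  · exact F7_ord _ _ _ (by linarith) (by linarith) (by linarith)

lemma dist_sq7 (P Q : EuclideanSpace ℝ (Fin 2)) :
    dist P Q ^ 2 = (P 0 - Q 0)^2 + (P 1 - Q 1)^2 := by
  rw [EuclideanSpace.dist_eq, Real.sq_sqrt (by positivity)]
  simp [Real.dist_eq, sq_abs]

lemma bary_dist7 (A B C : EuclideanSpace ℝ (Fin 2)) (x y z x' y' z' : ℝ)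
    (h : x + y + z ≠ 0) (h' : x' + y' + z' ≠ 0) :
    dist (bary A B C x y z) (bary A B C x' y' z') ^ 2 =
      N7 (dist B C) (dist C A) (dist A B) ((x+y+z)⁻¹ * x - (x'+y'+z')⁻¹ * x')
       ((x+y+z)⁻¹ * y - (x'+y'+z')⁻¹ * y') ((x+y+z)⁻¹ * z - (x'+y'+z')⁻¹ * z') := by
  unfold N7
  simp only [dist_sq7, bary, PiLp.smul_apply, PiLp.add_apply, smul_eq_mul]
  have e : (x+y+z)⁻¹ * z = 1 - (x+y+z)⁻¹ * x - (x+y+z)⁻¹ * y := by field_simp; ring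
  have e' : (x'+y'+z')⁻¹ * z' = 1 - (x'+y'+z')⁻¹ * x' - (x'+y'+z')⁻¹ * y' := by
    field_simp; ring
  generalize (x+y+z)⁻¹ = k at *
  generalize (x'+y'+z')⁻¹ = k' at *
  simp only [mul_add, ← mul_assoc]
  rw [e, e']
  ring

theorem stmt_7 (A B C : EuclideanSpace ℝ (Fin 2))
    (h : AffineIndependent ℝ ![A, B, C]) :
    dist (tcenter (fun a b c => a) A B C) (tcenter (fun a b c => (1:Real)) A B C) ≥ (2 * Real.sqrt 2 / 3) * dist (tcenter (fun a b c => a) A B C) (tcenter (fun a b c => a^2) A B C) := by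
  have hne : A ≠ B := by
    have := h.injective.ne (show (0 : Fin 3) ≠ 1 by decide)
    simpa using this
  have hc : 0 < dist A B := dist_pos.mpr hne
  have ha : 0 ≤ dist B C := dist_nonneg
  have hb : 0 ≤ dist C A := dist_nonneg
  have t1 : dist B C ≤ dist C A + dist A B := by
    have := dist_triangle B A C
    rw [dist_comm B A, dist_comm A C] at this; linarith
  have t2 : dist C A ≤ dist A B + dist B C := by
    have := dist_triangle C B A
    rw [dist_comm B A, dist_comm C B] at this; linarith
  have t3 : dist A B ≤ dist B C + dist C A := by
    have := dist_triangle A C B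
    rw [dist_comm A C, dist_comm C B] at this; linarith
  have hF := F7_nonneg _ _ _ t1 t2 t3
  unfold tcenter
  beta_reduce
  set a := dist B C with hae
  set b := dist C A with hbe
  set c := dist A B with hce
  have hs : 0 < a + b + c := by linarith
  have hq : 0 < a^2 + b^2 + c^2 := by positivity
  refine (sq_le_sq₀ (by positivity) dist_nonneg).mp ?_
  rw [mul_pow, bary_dist7 _ _ _ _ _ _ _ _ _ hs.ne' hq.ne',
    bary_dist7 _ _ _ _ _ _ _ _ _ hs.ne' (by norm_num), div_pow, mul_pow, Real.sq_sqrt (by norm_num),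
    ← hae, ← hbe, ← hce, ← sub_nonneg]
  have := div_nonneg hF (show 0 ≤ 9 * (a+b+c)^2 * (a^2+b^2+c^2)^2 by positivity)
  convert this using 1
  unfold F7 N7
  field_simp
  ring
end

section
/- In any nondegenerate triangle, the distance from the centroid X2 to the symmedian point X6 and the distance from X2 to the Spieker center X10 satisfy 2·dist(X2, X10) ≤ dist(X2, X6) ≤ (2 + 3/√2)·dist(X2, X10). -/
/-- Squared length of `u₁ A + u₂ B + u₃ C` (weights with sum zero) in terms of side lengths. -/
def nform (a b c p q r : ℝ) : ℝ := -(a^2*(q*r) + b^2*(r*p) + c^2*(p*q))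

def n10 (a b c : ℝ) : ℝ := nform a b c (b+c-2*a) (c+a-2*b) (a+b-2*c)

def n6 (a b c : ℝ) : ℝ :=
  nform a b c (2*a^2-b^2-c^2) (2*b^2-c^2-a^2) (2*c^2-a^2-b^2)

def lowF (a b c : ℝ) : ℝ := n6 a b c * (a+b+c)^2 - n10 a b c * (a^2+b^2+c^2)^2

noncomputable def upF (w a b c : ℝ) : ℝ :=
  (17/2 + 6*w) * (n10 a b c * (a^2+b^2+c^2)^2) - 4 * (n6 a b c * (a+b+c)^2)

lemma lowF_ord (x u v : ℝ) (hx : 0 ≤ x) (hu : 0 ≤ u) (hv : 0 ≤ v) :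
    0 ≤ lowF (2*x+2*u+v) (2*x+u+v) (2*x+u) := by
  have key : lowF (2*x+2*u+v) (2*x+u+v) (2*x+u) =
      5184 * x^6 * u^2
      + 18432 * x^5 * u^3
      + 25968 * x^4 * u^4
      + 18144 * x^3 * u^5
      + 6288 * x^2 * u^6
      + 864 * x^1 * u^7
      + 5184 * x^6 * u^1 * v^1
      + 27648 * x^5 * u^2 * v^1
      + 51936 * x^4 * u^3 * v^1
      + 45360 * x^3 * u^4 * v^1
      + 18864 * x^2 * u^5 * v^1
      + 3024 * x^1 * u^6 * v^1
      + 5184 * x^6 * v^2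
      + 34560 * x^5 * u^1 * v^2
      + 80784 * x^4 * u^2 * v^2
      + 87648 * x^3 * u^3 * v^2
      + 46548 * x^2 * u^4 * v^2
      + 10944 * x^1 * u^5 * v^2
      + 720 * u^6 * v^2
      + 12672 * x^5 * v^3
      + 54816 * x^4 * u^1 * v^3
      + 86112 * x^3 * u^2 * v^3
      + 61656 * x^2 * u^3 * v^3
      + 19800 * x^1 * u^4 * v^3
      + 2160 * u^5 * v^3
      + 11568 * x^4 * v^4
      + 35856 * x^3 * u^1 * v^4
      + 38628 * x^2 * u^2 * v^4
      + 17040 * x^1 * u^3 * v^4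
      + 2532 * u^4 * v^4
      + 5088 * x^3 * v^5
      + 10944 * x^2 * u^1 * v^5
      + 7272 * x^1 * u^2 * v^5
      + 1464 * u^3 * v^5
      + 1104 * x^2 * v^6
      + 1440 * x^1 * u^1 * v^6
      + 420 * u^2 * v^6
      + 96 * x^1 * v^7
      + 48 * u^1 * v^7 := by
    unfold lowF n6 n10 nform; ring
  rw [key]; positivity

lemma upF_iso (w x m : ℝ) (hw : w^2 = 2) (hw0 : 0 ≤ w) (hx : 0 ≤ x) (hm : 0 ≤ m) :
    0 ≤ upF w (2*x+2*m) (2*x+m) (2*x+m) := by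
  have key : upF w (2*x+2*m) (2*x+m) (2*x+m) =
      m^2 * (2*x*(2*(2*x+m) + (2*x+2*m))) *
      ((3/2*w*(2*x+2*m-w*(2*x+m))^2) *
       ((2+3/2*w)*((2*x+2*m)^2+2*(2*x+m)^2)
        + 2*((2*x+2*m)+2*(2*x+m))*((2*x+2*m)+(2*x+m)))) := by
    have h3 : 3/2*w*(2*x+2*m-w*(2*x+m))^2 =
      (2+3/2*w)*((2*x+2*m)^2+2*(2*x+m)^2)
        - 2*((2*x+2*m)+2*(2*x+m))*((2*x+2*m)+(2*x+m)) := by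
      linear_combination (-3*(2*x+2*m)*(2*x+m) + 3/2*w*(2*x+m)^2) * hw
    rw [h3]
    unfold upF n6 n10 nform
    linear_combination (-(m^2 * (2*x*(2*(2*x+m) + (2*x+2*m)))) * (9/4) *
      ((2*x+2*m)^2+2*(2*x+m)^2)^2) * hw
  rw [key]; positivity

lemma upF_ord (w x u v : ℝ) (hw : w^2 = 2) (hw0 : 7/5 ≤ w)
    (hx : 0 ≤ x) (hu : 0 ≤ u) (hv : 0 ≤ v) :
    0 ≤ upF w (2*x+2*u+v) (2*x+u+v) (2*x+u) := by
  have h0 := upF_iso w x (u+v/2) hw (by linarith) hx (by positivity)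
  obtain ⟨e, rfl⟩ : ∃ e, w = e + 7/5 := ⟨w - 7/5, by ring⟩
  have he : 0 ≤ e := by linarith
  clear hw hw0
  have key : upF (e+7/5) (2*x+2*u+v) (2*x+u+v) (2*x+u) =
      upF (e+7/5) (2*x+2*(u+v/2)) (2*x+(u+v/2)) (2*x+(u+v/2)) + (
      (7776 * e + 5832/5) * x^6 * v^2
      + (46656 * e + 86832/5) * x^5 * u^1 * v^2
      + (105408 * e + 296496/5) * x^4 * u^2 * v^2
      + (120960 * e + 90912) * x^3 * u^3 * v^2
      + (76104 * e + 358758/5) * x^2 * u^4 * v^2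
      + (25200 * e + 28548) * x^1 * u^5 * v^2
      + (3456 * e + 22752/5) * u^6 * v^2
      + (23328 * e + 43416/5) * x^5 * v^3
      + (105408 * e + 296496/5) * x^4 * u^1 * v^3
      + (181440 * e + 136368) * x^3 * u^2 * v^3
      + (152208 * e + 717516/5) * x^2 * u^3 * v^3
      + (63000 * e + 71370) * x^1 * u^4 * v^3
      + (10368 * e + 68256/5) * u^5 * v^3
      + (27000 * e + 18270) * x^4 * v^4
      + (93744 * e + 404028/5) * x^3 * u^1 * v^4
      + (118530 * e + 247815/2) * x^2 * u^2 * v^4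
      + (65628 * e + 402501/5) * x^1 * u^3 * v^4
      + (13536 * e + 94872/5) * u^4 * v^4
      + (16632 * e + 88374/5) * x^3 * v^5
      + (42426 * e + 521559/10) * x^2 * u^1 * v^5
      + (35442 * e + 493803/10) * x^1 * u^2 * v^5
      + (9792 * e + 75984/5) * u^3 * v^5
      + (11727/2 * e + 343341/40) * x^2 * v^6
      + (9891 * e + 317673/20) * x^1 * u^1 * v^6
      + (4128 * e + 35976/5) * u^2 * v^6
      + (2277/2 * e + 83631/40) * x^1 * v^7
      + (960 * e + 1872) * u^1 * v^7
      + (96 * e + 1032/5) * v^8) := by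
    unfold upF n6 n10 nform; ring
  rw [key]
  refine add_nonneg h0 ?_
  positivity

lemma both_sorted (w a b c : ℝ) (hw : w^2 = 2) (hw0 : 7/5 ≤ w)
    (hab : b ≤ a) (hbc : c ≤ b) (ht : a ≤ b + c) :
    0 ≤ lowF a b c ∧ 0 ≤ upF w a b c := by
  have h1 := lowF_ord ((b+c-a)/2) (a-b) (b-c) (by linarith) (by linarith) (by linarith)
  have h2 := upF_ord w ((b+c-a)/2) (a-b) (b-c) hw hw0 (by linarith) (by linarith) (by linarith)
  have e1 : 2*((b+c-a)/2) + 2*(a-b) + (b-c) = a := by ring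
  have e2 : 2*((b+c-a)/2) + (a-b) + (b-c) = b := by ring
  have e3 : 2*((b+c-a)/2) + (a-b) = c := by ring
  rw [e1, e2, e3] at h1 h2
  exact ⟨h1, h2⟩

lemma lowF_swap1 (a b c : ℝ) : lowF a b c = lowF b a c := by
  unfold lowF n6 n10 nform; ring

lemma lowF_swap2 (a b c : ℝ) : lowF a b c = lowF a c b := by
  unfold lowF n6 n10 nform; ring

lemma upF_swap1 (w a b c : ℝ) : upF w a b c = upF w b a c := by
  unfold upF n6 n10 nform; ring

lemma upF_swap2 (w a b c : ℝ) : upF w a b c = upF w a c b := by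
  unfold upF n6 n10 nform; ring

lemma both (w a b c : ℝ) (hw : w^2 = 2) (hw0 : 7/5 ≤ w)
    (h1 : a ≤ b + c) (h2 : b ≤ c + a) (h3 : c ≤ a + b) :
    0 ≤ lowF a b c ∧ 0 ≤ upF w a b c := by
  rcases le_total a b with hab | hab <;> rcases le_total b c with hbc | hbc <;>
    rcases le_total a c with hac | hac
  · rw [lowF_swap1, lowF_swap2, lowF_swap1, upF_swap1, upF_swap2, upF_swap1]
    exact both_sorted w c b a hw hw0 hbc hab (by linarith)
  · rw [lowF_swap1, lowF_swap2, lowF_swap1, upF_swap1, upF_swap2, upF_swap1]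
    exact both_sorted w c b a hw hw0 hbc hab (by linarith)
  · rw [lowF_swap1, lowF_swap2, upF_swap1, upF_swap2]
    exact both_sorted w b c a hw hw0 hbc hac (by linarith)
  · rw [lowF_swap1, upF_swap1]
    exact both_sorted w b a c hw hw0 hab hac (by linarith)
  · rw [lowF_swap2, lowF_swap1, upF_swap2, upF_swap1]
    exact both_sorted w c a b hw hw0 hac hab (by linarith)
  · rw [lowF_swap2, upF_swap2]
    exact both_sorted w a c b hw hw0 hac hbc (by linarith)
  · exact both_sorted w a b c hw hw0 hab hbc (by linarith)
  · exact both_sorted w a b c hw hw0 hab hbc (by linarith)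

lemma le_of_sq_le_sq_aux {p q : ℝ} (h : p^2 ≤ q^2) (hq : 0 ≤ q) : p ≤ q :=
  (le_abs_self p).trans (abs_le_of_sq_le_sq h hq)

lemma norm_comb (A B C : EuclideanSpace ℝ (Fin 2)) (p q r : ℝ) (h : p + q + r = 0) :
    ‖p • A + q • B + r • C‖^2 = nform (dist B C) (dist C A) (dist A B) p q r := by
  obtain rfl : r = -p - q := by linarith
  unfold nform
  simp only [dist_eq_norm, EuclideanSpace.real_norm_sq_eq, Fin.sum_univ_two, PiLp.add_apply,
    PiLp.sub_apply, PiLp.smul_apply, smul_eq_mul]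
  ring

lemma dist_sq_10 (A B C : EuclideanSpace ℝ (Fin 2))
    (hS : 0 < dist B C + dist C A + dist A B) :
    36 * (dist B C + dist C A + dist A B)^2 *
      dist (tcenter (fun _ _ _ => (1:Real)) A B C) (tcenter (fun _ b c => b + c) A B C)^2
      = n10 (dist B C) (dist C A) (dist A B) := by
  unfold n10
  rw [← norm_comb A B C _ _ _ (by ring),
    dist_comm (tcenter _ A B C), dist_eq_norm (tcenter _ A B C)]
  unfold tcenter bary
  generalize dist B C = a at *
  generalize dist C A = b at *
  generalize dist A B = c at *
  have hS' : (6*(a+b+c)) ≠ 0 := by positivity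
  have : (b+c-2*a) • A + (c+a-2*b) • B + (a+b-2*c) • C = (6*(a+b+c)) •
      ((b + c + (c + a) + (a + b))⁻¹ • ((b + c) • A + (c + a) • B + (a + b) • C)
        - ((1:ℝ) + 1 + 1)⁻¹ • ((1:ℝ) • A + (1:ℝ) • B + (1:ℝ) • C)) := by
    have e : b + c + (c + a) + (a + b) = 2*(a+b+c) := by ring
    rw [e]
    have hne := hS.ne'
    match_scalars <;> field_simp <;> ring
  beta_reduce
  rw [this, norm_smul, mul_pow, Real.norm_eq_abs, sq_abs]
  ring

lemma dist_sq_6 (A B C : EuclideanSpace ℝ (Fin 2))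
    (hS : 0 < dist B C ^ 2 + dist C A ^ 2 + dist A B ^ 2) :
    9 * (dist B C ^ 2 + dist C A ^ 2 + dist A B ^ 2)^2 *
      dist (tcenter (fun _ _ _ => (1:Real)) A B C) (tcenter (fun a _ _ => a^2) A B C)^2
      = n6 (dist B C) (dist C A) (dist A B) := by
  unfold n6
  rw [← norm_comb A B C _ _ _ (by ring),
    dist_comm (tcenter _ A B C), dist_eq_norm (tcenter _ A B C)]
  unfold tcenter bary
  generalize dist B C = a at *
  generalize dist C A = b at *
  generalize dist A B = c at *
  have : (2*a^2-b^2-c^2) • A + (2*b^2-c^2-a^2) • B + (2*c^2-a^2-b^2) • C =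
      (3*(a^2+b^2+c^2)) •
      ((a^2+b^2+c^2)⁻¹ • (a^2 • A + b^2 • B + c^2 • C)
        - ((1:ℝ) + 1 + 1)⁻¹ • ((1:ℝ) • A + (1:ℝ) • B + (1:ℝ) • C)) := by
    have hne := hS.ne'
    match_scalars <;> field_simp <;> ring
  beta_reduce
  rw [this, norm_smul, mul_pow, Real.norm_eq_abs, sq_abs]
  ring

theorem stmt_12 (A B C : EuclideanSpace ℝ (Fin 2))
    (h : AffineIndependent ℝ ![A, B, C]) :
    2 * dist (tcenter (fun a b c => (1:Real)) A B C) (tcenter (fun a b c => b + c) A B C) ≤ dist (tcenter (fun a b c => (1:Real)) A B C) (tcenter (fun a b c => a^2) A B C) ∧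
      dist (tcenter (fun a b c => (1:Real)) A B C) (tcenter (fun a b c => a^2) A B C) ≤ (2 + 3 / Real.sqrt 2) * dist (tcenter (fun a b c => (1:Real)) A B C) (tcenter (fun a b c => b + c) A B C) := by
  have hAB : A ≠ B := fun hh => by
    have := h.injective.ne (show (0 : Fin 3) ≠ 1 by decide)
    exact this (by simpa using hh)
  have hpos : 0 < dist A B := dist_pos.mpr hAB
  have t1 : dist B C ≤ dist C A + dist A B := by
    have := dist_triangle B A C
    rw [dist_comm B A, dist_comm A C] at this; linarith
  have t2 : dist C A ≤ dist A B + dist B C := by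
    have := dist_triangle C B A
    rw [dist_comm B A, dist_comm C B] at this; linarith
  have t3 : dist A B ≤ dist B C + dist C A := by
    have := dist_triangle A C B
    rw [dist_comm A C, dist_comm C B] at this; linarith
  have hw : Real.sqrt 2 ^ 2 = 2 := Real.sq_sqrt (by norm_num)
  have hw0 : 7/5 ≤ Real.sqrt 2 := Real.le_sqrt_of_sq_le (by norm_num)
  have hS : 0 < dist B C + dist C A + dist A B := by positivity
  have hQ : 0 < dist B C ^ 2 + dist C A ^ 2 + dist A B ^ 2 := by positivity
  obtain ⟨hl, hu⟩ := both _ _ _ _ hw hw0 t1 t2 t3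
  have d10 := dist_sq_10 A B C hS
  have d6 := dist_sq_6 A B C hQ
  have hk : 2 + 3 / Real.sqrt 2 = 2 + 3/2 * Real.sqrt 2 := by
    have : Real.sqrt 2 ≠ 0 := by positivity
    field_simp; linear_combination (-3) * hw
  rw [hk]
  unfold lowF at hl
  unfold upF at hu
  rw [← d10, ← d6] at hl hu
  have p10 : 0 ≤ dist (tcenter (fun _ _ _ => (1:Real)) A B C)
    (tcenter (fun _ b c => b + c) A B C) := dist_nonneg
  have p6 : 0 ≤ dist (tcenter (fun _ _ _ => (1:Real)) A B C)
    (tcenter (fun a _ _ => a^2) A B C) := dist_nonneg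
  clear d10 d6
  generalize dist (tcenter (fun _ _ _ => (1:Real)) A B C)
    (tcenter (fun _ b c => b + c) A B C) = y at *
  generalize dist (tcenter (fun _ _ _ => (1:Real)) A B C)
    (tcenter (fun a _ _ => a^2) A B C) = z at *
  generalize dist B C + dist C A + dist A B = S at *
  generalize dist B C ^ 2 + dist C A ^ 2 + dist A B ^ 2 = Q at *
  generalize Real.sqrt 2 = w at *
  have hSQ : 0 < S^2 * Q^2 := by positivity
  constructor
  · refine le_of_sq_le_sq_aux ?_ p6
    refine le_of_mul_le_mul_left ?_ hSQ
    linarith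
  · refine le_of_sq_le_sq_aux ?_ (by positivity)
    refine le_of_mul_le_mul_left ?_ hSQ
    have : ((2 + 3/2*w) * y)^2 = (17/2 + 6*w) * y^2 := by
      linear_combination (9/4*y^2) * hw
    rw [this]
    linarith
end

section
/- In any nondegenerate triangle, the distance from the circumcenter X3 to the incenter X1 and the distance from X3 to the centroid X2 satisfy dist(X3, X2) ≤ dist(X3, X1) ≤ 3·dist(X3, X2). -/
lemma poly_second (a b c : ℝ) (ha : 0 < a) (hb : 0 < b) (hc : 0 < c)
    (h1 : a ≤ b + c) (h2 : b ≤ c + a) (h3 : c ≤ a + b) :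
    ((a^2+b^2+c^2)*(a+b+c) - a*b*c) * ((b+c-a)*(c+a-b)*(a+b-c)) ≤ 8*(a*b*c)^2 := by
  obtain ⟨x, hx⟩ : ∃ x, x = (b+c-a)/2 := ⟨_, rfl⟩
  obtain ⟨y, hy⟩ : ∃ y, y = (c+a-b)/2 := ⟨_, rfl⟩
  obtain ⟨z, hz⟩ : ∃ z, z = (a+b-c)/2 := ⟨_, rfl⟩
  have hx0 : 0 ≤ x := by linarith
  have hy0 : 0 ≤ y := by linarith
  have hz0 : 0 ≤ z := by linarith
  obtain rfl : a = y + z := by linarith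
  obtain rfl : b = z + x := by linarith
  obtain rfl : c = x + y := by linarith
  have : 0 ≤ 8*(x+y+z)*(x^3*(y-z)^2+y^3*(z-x)^2+z^3*(x-y)^2) := by positivity
  linarith

lemma poly_first (a b c : ℝ) (ha : 0 < a) (hb : 0 < b) (hc : 0 < c) :
    9*(a*b*c) ≤ (a^2+b^2+c^2)*(a+b+c) := by
  nlinarith [mul_nonneg ha.le (sq_nonneg (b-c)), mul_nonneg hb.le (sq_nonneg (c-a)),
    mul_nonneg hc.le (sq_nonneg (a-b)), mul_nonneg (add_pos ha hb).le (sq_nonneg (a-b)),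
    mul_nonneg (add_pos hb hc).le (sq_nonneg (b-c)), mul_nonneg (add_pos hc ha).le (sq_nonneg (c-a))]

lemma cross_ne (A B C : EuclideanSpace ℝ (Fin 2)) (h : AffineIndependent ℝ ![A, B, C]) :
    (B 0 - A 0) * (C 1 - A 1) - (B 1 - A 1) * (C 0 - A 0) ≠ 0 := by
  intro hk
  rw [affineIndependent_iff] at h
  have key : ∀ u v : ℝ, u * (B 0 - A 0) + v * (C 0 - A 0) = 0 →
      u * (B 1 - A 1) + v * (C 1 - A 1) = 0 → u = 0 ∧ v = 0 := by
    intro u v e0 e1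
    have := h Finset.univ ![-u-v, u, v] (by simp [Fin.sum_univ_three]; ring) (by
      ext i
      fin_cases i
      · simp [Fin.sum_univ_three]; linarith
      · simp [Fin.sum_univ_three]; linarith)
    exact ⟨this 1 (Finset.mem_univ _), this 2 (Finset.mem_univ _)⟩
  have k1 := key (C 1 - A 1) (-(B 1 - A 1)) (by linarith) (by ring)
  have k2 := key (C 0 - A 0) (-(B 0 - A 0)) (by ring) (by linarith)
  have k3 := key 1 0 (by linarith [k2.2]) (by linarith [k1.2])
  exact one_ne_zero k3.1

/-- Distances (squared) from the circumcenter, with everything expressed through the sides. -/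
lemma dist_core (a b c R u0 u1 v0 v1 w0 w1 : ℝ)
    (hu : u0^2+u1^2 = R) (hv : v0^2+v1^2 = R) (hw : w0^2+w1^2 = R)
    (ha : a^2 = (v0-w0)^2+(v1-w1)^2) (hb : b^2 = (w0-u0)^2+(w1-u1)^2)
    (hc : c^2 = (u0-v0)^2+(u1-v1)^2) (x y z : ℝ) (hs : x+y+z ≠ 0) :
    ((x+y+z)⁻¹*(x*u0+y*v0+z*w0))^2 + ((x+y+z)⁻¹*(x*u1+y*v1+z*w1))^2 =
      R - (a^2*y*z+b^2*z*x+c^2*x*y)/(x+y+z)^2 := by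
  rw [ha, hb, hc]
  field_simp
  linear_combination x*(x+y+z)*hu + y*(x+y+z)*hv+z*(x+y+z)*hw

lemma circum (p q r s : ℝ) (hk : p*s-q*r ≠ 0) (A0 A1 : ℝ) (a2 b2 c2 : ℝ)
    (ha : a2 = (p-r)^2+(q-s)^2) (hb : b2 = r^2+s^2) (hc : c2 = p^2+q^2) :
    a2*(a2-b2-c2)+b2*(b2-c2-a2)+c2*(c2-a2-b2) = -4*(p*s-q*r)^2 ∧
    (a2*(a2-b2-c2)+b2*(b2-c2-a2)+c2*(c2-a2-b2))⁻¹ *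
      (a2*(a2-b2-c2)*A0+b2*(b2-c2-a2)*(A0+p)+c2*(c2-a2-b2)*(A0+r)) =
      A0 + ((p^2+q^2)*s-(r^2+s^2)*q)/(2*(p*s-q*r)) ∧
    (a2*(a2-b2-c2)+b2*(b2-c2-a2)+c2*(c2-a2-b2))⁻¹ *
      (a2*(a2-b2-c2)*A1+b2*(b2-c2-a2)*(A1+q)+c2*(c2-a2-b2)*(A1+s)) =
      A1 + ((r^2+s^2)*p-(p^2+q^2)*r)/(2*(p*s-q*r)) := by
  have e : a2*(a2-b2-c2)+b2*(b2-c2-a2)+c2*(c2-a2-b2) = -4*(p*s-q*r)^2 := by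
    rw [ha, hb, hc]; ring
  refine ⟨e, ?_, ?_⟩
  · rw [e, ha, hb, hc]; field_simp; ring
  · rw [e, ha, hb, hc]; field_simp; ring

lemma le_of_sq_le_sq_aux_s13 {x y : ℝ} (h : x^2 ≤ y^2) (hy : 0 ≤ y) : x ≤ y := by
  nlinarith

lemma final_step (a b c R g i : ℝ) (ha : 0 < a) (hb : 0 < b) (hc : 0 < c)
    (h1 : a ≤ b + c) (h2 : b ≤ c + a) (h3 : c ≤ a + b) (hg : 0 ≤ g) (hi : 0 ≤ i)
    (D : ℝ) (hD : 0 < D)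
    (hDe : a^2*(a^2-b^2-c^2)+b^2*(b^2-c^2-a^2)+c^2*(c^2-a^2-b^2) = -D)
    (hRD : R * D = a^2*b^2*c^2)
    (dG : g^2 = R - (a^2*1*1+b^2*1*1+c^2*1*1)/(1+1+1)^2)
    (dI : i^2 = R - (a^2*b*c+b^2*c*a+c^2*a*b)/(a+b+c)^2) : g ≤ i ∧ i ≤ 3*g := by
  have hs : 0 < a + b + c := by positivity
  have e : (a^2*b*c+b^2*c*a+c^2*a*b)/(a+b+c)^2 = a*b*c/(a+b+c) := by
    field_simp
  rw [e] at dI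
  have p1 := poly_first a b c ha hb hc
  have p2 := poly_second a b c ha hb hc h1 h2 h3
  have q1 : a*b*c/(a+b+c) ≤ (a^2+b^2+c^2)/9 := by
    rw [div_le_div_iff₀ hs (by norm_num)]; linarith
  have q2 : a^2+b^2+c^2 - a*b*c/(a+b+c) ≤ 8*R := by
    have hx : (a^2+b^2+c^2 - a*b*c/(a+b+c)) * D =
        ((a^2+b^2+c^2)*(a+b+c) - a*b*c) * ((b+c-a)*(c+a-b)*(a+b-c)) := by
      have : D = (a+b+c)*((b+c-a)*(c+a-b)*(a+b-c)) := by linarith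
      rw [this]; field_simp
    refine le_of_mul_le_mul_right ?_ hD
    rw [hx]; linarith
  constructor
  · refine le_of_sq_le_sq_aux_s13 ?_ hi
    linarith
  · refine le_of_sq_le_sq_aux_s13 ?_ (by positivity)
    rw [mul_pow]
    linarith

theorem stmt_13 (A B C : EuclideanSpace ℝ (Fin 2))
    (h : AffineIndependent ℝ ![A, B, C]) :
    dist (tcenter (fun a b c => a^2*(a^2 - b^2 - c^2)) A B C) (tcenter (fun a b c => (1:Real)) A B C) ≤ dist (tcenter (fun a b c => a^2*(a^2 - b^2 - c^2)) A B C) (tcenter (fun a b c => a) A B C) ∧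
      dist (tcenter (fun a b c => a^2*(a^2 - b^2 - c^2)) A B C) (tcenter (fun a b c => a) A B C) ≤ 3 * dist (tcenter (fun a b c => a^2*(a^2 - b^2 - c^2)) A B C) (tcenter (fun a b c => (1:Real)) A B C) := by
  have hk := cross_ne A B C h
  have sq : ∀ X Y : EuclideanSpace ℝ (Fin 2), dist X Y ^ 2 = (X 0 - Y 0)^2 + (X 1 - Y 1)^2 := by
    intro X Y
    rw [EuclideanSpace.dist_eq, Real.sq_sqrt (by positivity)]
    simp [Fin.sum_univ_two, Real.dist_eq, sq_abs]
  have hAB : 0 < dist A B := dist_pos.2 (by rintro rfl; apply hk; ring)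
  have hBC : 0 < dist B C := dist_pos.2 (by rintro rfl; apply hk; ring)
  have hCA : 0 < dist C A := dist_pos.2 (by rintro rfl; apply hk; ring)
  have t1 : dist B C ≤ dist C A + dist A B := by
    have := dist_triangle B A C; rw [dist_comm B A, dist_comm A C] at this; linarith
  have t2 : dist C A ≤ dist A B + dist B C := by
    have := dist_triangle C B A; rw [dist_comm C B, dist_comm B A] at this; linarith
  have t3 : dist A B ≤ dist B C + dist C A := by
    have := dist_triangle A C B; rw [dist_comm A C, dist_comm C B] at this; linarith
  have qa := sq B C
  have qb := sq C A
  have qc := sq A B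
  obtain ⟨O, hO⟩ : ∃ O, O = tcenter (fun a b c => a^2*(a^2 - b^2 - c^2)) A B C := ⟨_, rfl⟩
  obtain ⟨e, e0, e1⟩ := circum (B 0 - A 0) (B 1 - A 1) (C 0 - A 0) (C 1 - A 1) hk (A 0) (A 1)
    (dist B C ^ 2) (dist C A ^ 2) (dist A B ^ 2) (by rw [qa]; ring) (by rw [qb])
    (by rw [qc]; ring)
  have O0 := Eq.trans (a := O 0) (by
    rw [hO]
    simp only [tcenter, bary, PiLp.smul_apply, PiLp.add_apply, smul_eq_mul]
    simp only [add_sub_cancel]) e0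
  have O1 := Eq.trans (a := O 1) (by
    rw [hO]
    simp only [tcenter, bary, PiLp.smul_apply, PiLp.add_apply, smul_eq_mul]
    simp only [add_sub_cancel]) e1
  obtain ⟨R, hR⟩ : ∃ R, R = (A 0 - O 0)^2 + (A 1 - O 1)^2 := ⟨_, rfl⟩
  have hRB : (B 0 - O 0)^2 + (B 1 - O 1)^2 = R := by
    rw [hR, O0, O1]; field_simp; ring
  have hRC : (C 0 - O 0)^2 + (C 1 - O 1)^2 = R := by
    rw [hR, O0, O1]; field_simp; ring
  have hRD : R * (4*((B 0 - A 0) * (C 1 - A 1) - (B 1 - A 1) * (C 0 - A 0))^2)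
      = dist B C ^ 2 * dist C A ^ 2 * dist A B ^ 2 := by
    rw [hR, O0, O1, qa, qb, qc]; field_simp; ring
  have core := dist_core (dist B C) (dist C A) (dist A B) R (A 0 - O 0) (A 1 - O 1)
    (B 0 - O 0) (B 1 - O 1) (C 0 - O 0) (C 1 - O 1) hR.symm hRB hRC
    (by rw [qa]; ring) (by rw [qb]; ring) (by rw [qc]; ring)
  have dO : ∀ x y z : ℝ, x+y+z ≠ 0 → dist O (bary A B C x y z) ^ 2 =
      R - (dist B C^2*y*z+dist C A^2*z*x+dist A B^2*x*y)/(x+y+z)^2 := by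
    intro x y z hs
    rw [sq, ← core x y z hs]
    simp only [bary, PiLp.smul_apply, PiLp.add_apply, smul_eq_mul]
    field_simp
    ring
  rw [← hO]
  have dG := dO 1 1 1 (by norm_num)
  have dI := dO (dist B C) (dist C A) (dist A B) (by positivity)
  simp only [tcenter]
  exact final_step _ _ _ R _ _ hBC hCA hAB t1 t2 t3 dist_nonneg dist_nonneg
    _ (by positivity) (by rw [e]; ring) hRD dG dI
end

section
/- In any nondegenerate triangle, the distance from the symmedian point X6 to the incenter X1 satisfies dist(X6, X1) ≤ (9 − 6√2)·dist(X6, X2), where X2 is the centroid. -/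
lemma aux_g1 (t : ℝ) (h1 : 1 ≤ t) (h2 : t ≤ 2) :
    0 ≤ -t^5+4*t^4-2*t^3-12*t^2+8*t + 0.0294*(t+2)*(6*t^4+66*t^2-36) := by
  obtain ⟨u, rfl⟩ : ∃ u, t = 1 + u := ⟨t - 1, by ring⟩
  have hu : 0 ≤ u := by linarith
  have hu1 : u ≤ 1 := by linarith
  nlinarith [mul_nonneg hu (sub_nonneg.2 hu1), mul_nonneg (pow_nonneg hu 2) (sub_nonneg.2 hu1),
    mul_nonneg (pow_nonneg hu 3) (sub_nonneg.2 hu1), mul_nonneg (pow_nonneg hu 4) (sub_nonneg.2 hu1),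
    pow_nonneg hu 2, pow_nonneg hu 3, pow_nonneg hu 4, pow_nonneg hu 5]

lemma aux_g (t d : ℝ) (h1 : 1 ≤ t) (h2 : t ≤ 2) (hd : 0 ≤ d) (hd1 : d ≤ (t-1)^2) :
    0 ≤ (-t^5+4*t^4-2*t^3-12*t^2+8*t + d*(14*t^2-3*t^3) - 8*t*d^2)
      + 0.0294*(t+2)*(6*t^4+66*t^2-36 - d*(9*t^2+36)+4*d^2) := by
  have hg := aux_g1 t h1 h2
  have hd2 : d ≤ t - 1 := by nlinarith
  have h3 : 0 ≤ (14*t^2-3*t^3) - 8*t*d - 0.0294*(t+2)*(9*t^2+36) := by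
    have : t * d ≤ t * (t-1) := by nlinarith
    obtain ⟨u, rfl⟩ : ∃ u, t = 1 + u := ⟨t - 1, by ring⟩
    have hu : 0 ≤ u := by linarith
    have hu1 : u ≤ 1 := by linarith
    nlinarith [mul_nonneg hu (sub_nonneg.2 hu1), mul_nonneg (pow_nonneg hu 2) (sub_nonneg.2 hu1)]
  have h4 := mul_nonneg hd h3
  have h5 : 0 ≤ 0.0294*(t+2)*(4*d^2) := by positivity
  nlinarith

lemma aux_k : (0.0294:ℝ) ≤ 17 - 12 * √2 := by
  have : √2 ≤ 1.41421357 := Real.sqrt_le_iff.2 ⟨by norm_num, by norm_num⟩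
  linarith

lemma aux_Q (t d : ℝ) (h1 : 1 ≤ t) (h2 : t ≤ 2) (hd : 0 ≤ d) (hd1 : d ≤ (t-1)^2) :
    (t*(1-d)) * (2*(2+2*d+t^2)*(1-d+2*t) - (2+2*d+t^2)^2 - 3*(t*(1-d))*(2+t)) ≤
    (17 - 12 * √2) * (2+t) * (6*(2+2*d+t^2)*((1-d+2*t)^2-2*(2+t)*(t*(1-d)))
      - (2+2*d+t^2)^3-27*(t*(1-d))^2) := by
  have hs : √2 ^ 2 = 2 := Real.sq_sqrt (by norm_num)
  have hg := aux_g t d h1 h2 hd hd1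
  have hk := aux_k
  have hpos : 0 ≤ (t+2)*(6*t^4+66*t^2-36 - d*(9*t^2+36)+4*d^2) := by
    have hd3 : d ≤ 1 := by nlinarith
    apply mul_nonneg (by linarith)
    have : 1 ≤ t^2 := by nlinarith
    have : d ≤ t - 1 := by nlinarith
    nlinarith [mul_nonneg hd (sub_nonneg.2 hd3), sq_nonneg (t^2-1), mul_nonneg (sub_nonneg.2 hd3) (sq_nonneg t)]
  have hk2 := mul_le_mul_of_nonneg_right hk hpos
  have hsm : 0 ≤ 3 - 2 * √2 := by
    nlinarith [Real.sqrt_nonneg 2]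
  have hF0 : 0 ≤ (t-1)^2*(2-t)*(((3 - 2*√2)*(t - √2)^2)*((3-2*√2)*((t+2)*(t+1))+t)) := by
    have : 0 ≤ 2 - t := by linarith
    positivity
  have e1 : ((3 - 2*√2)*(t - √2)^2) = (3-2*√2)*((t+2)*(t+1)) - t := by
    linear_combination (4*t + 3 - 2 * √2)*hs
  rw [e1] at hF0
  have e2 : (t-1)^2*(2-t)*(((3-2*√2)*((t+2)*(t+1)) - t)*((3-2*√2)*((t+2)*(t+1))+t))
    = (t-1)^2*(2-t)*((17-12*√2)*((t+2)*(t+1))^2 - t^2) := by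
    linear_combination (t-1)^2*(2-t)*4*((t+2)*(t+1))^2*hs
  rw [e2] at hF0
  generalize 17 - 12 * √2 = k at *
  have hfin : 0 ≤ d * ((-t^5+4*t^4-2*t^3-12*t^2+8*t + d*(14*t^2-3*t^3) - 8*t*d^2)
      + k*((t+2)*(6*t^4+66*t^2-36 - d*(9*t^2+36)+4*d^2))) := by
    apply mul_nonneg hd; linarith
  linarith

lemma aux_max (a b c : ℝ) (ha : 0 < a) (hb : 0 < b) (hac : a ≤ c) (hbc : b ≤ c)
    (hab : c ≤ a + b) :
    (a*b*c) * (2*(a^2+b^2+c^2)*(a*b+b*c+c*a) - (a^2+b^2+c^2)^2 - 3*(a*b*c)*(a+b+c)) ≤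
    (17 - 12 * √2) * (a+b+c) * (6*(a^2+b^2+c^2)*(a^2*b^2+b^2*c^2+c^2*a^2)
      - (a^2+b^2+c^2)^3-27*(a*b*c)^2) := by
  obtain ⟨m, hm⟩ : ∃ m, m = (a+b)/2 := ⟨_, rfl⟩
  have hm0 : 0 < m := by rw [hm]; linarith
  obtain ⟨e, he⟩ : ∃ e, e = (a-b)/2/m := ⟨_, rfl⟩
  obtain ⟨t, ht⟩ : ∃ t, t = c/m := ⟨_, rfl⟩
  have hc' : c = m * t := by rw [ht]; field_simp
  have hem : m * e = (a-b)/2 := by rw [he]; field_simp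
  have ha' : a = m * (1 + e) := by linarith
  have hb' : b = m * (1 - e) := by linarith
  have h1 : 1 + e ≤ t := by rw [ha', hc'] at hac; exact le_of_mul_le_mul_left hac hm0
  have h2 : 1 - e ≤ t := by rw [hb', hc'] at hbc; exact le_of_mul_le_mul_left hbc hm0
  have h3 : t ≤ 2 := by
    have : m * t ≤ m * 2 := by linarith
    exact le_of_mul_le_mul_left this hm0
  have := aux_Q t (e^2) (by linarith) h3 (sq_nonneg e) (by nlinarith)
  have := mul_le_mul_of_nonneg_left this (pow_nonneg hm0.le 7)
  rw [ha', hb', hc']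
  generalize 17 - 12 * √2 = k at *
  linarith

lemma aux_all (a b c : ℝ) (ha : 0 < a) (hb : 0 < b) (hc : 0 < c)
    (h1 : c ≤ a + b) (h2 : a ≤ b + c) (h3 : b ≤ c + a) :
    (a*b*c) * (2*(a^2+b^2+c^2)*(a*b+b*c+c*a) - (a^2+b^2+c^2)^2 - 3*(a*b*c)*(a+b+c)) ≤
    (17 - 12 * √2) * (a+b+c) * (6*(a^2+b^2+c^2)*(a^2*b^2+b^2*c^2+c^2*a^2)
      - (a^2+b^2+c^2)^3-27*(a*b*c)^2) := by
  by_cases hA : a ≤ c ∧ b ≤ c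
  · exact aux_max a b c ha hb hA.1 hA.2 h1
  by_cases hB : b ≤ a ∧ c ≤ a
  · have := aux_max b c a hb hc hB.1 hB.2 h2
    generalize 17 - 12 * √2 = k at *
    linarith
  · have hC : c ≤ b ∧ a ≤ b := by grind
    have := aux_max c a b hc ha hC.1 hC.2 h3
    generalize 17 - 12 * √2 = k at *
    linarith

lemma aux_dist (A B C : EuclideanSpace ℝ (Fin 2)) (x y z x' y' z' : ℝ)
    (hs : x + y + z ≠ 0) (hs' : x' + y' + z' ≠ 0) :
    dist (bary A B C x y z) (bary A B C x' y' z') ^ 2 =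
     -(dist B C ^ 2 * (y/(x+y+z) - y'/(x'+y'+z')) * (z/(x+y+z) - z'/(x'+y'+z'))
      + dist C A ^ 2 * (z/(x+y+z) - z'/(x'+y'+z')) * (x/(x+y+z) - x'/(x'+y'+z'))
      + dist A B ^ 2 * (x/(x+y+z) - x'/(x'+y'+z')) * (y/(x+y+z) - y'/(x'+y'+z'))) := by
  have hx : x/(x+y+z) - x'/(x'+y'+z') =
    -(y/(x+y+z) - y'/(x'+y'+z')) - (z/(x+y+z) - z'/(x'+y'+z')) := by
    field_simp; ring
  simp only [EuclideanSpace.dist_eq, Fin.sum_univ_two, Real.dist_eq, sq_abs]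
  rw [Real.sq_sqrt (by positivity), Real.sq_sqrt (by positivity), Real.sq_sqrt (by positivity),
    Real.sq_sqrt (by positivity)]
  have key : ∀ i, bary A B C x y z i - bary A B C x' y' z' i =
     (x/(x+y+z) - x'/(x'+y'+z')) * A i + (y/(x+y+z) - y'/(x'+y'+z')) * B i +
     (z/(x+y+z) - z'/(x'+y'+z')) * C i := by
    intro i
    simp only [bary, PiLp.smul_apply, PiLp.add_apply, smul_eq_mul]
    ring
  rw [key, key, hx]
  ring

theorem stmt_15 (A B C : EuclideanSpace ℝ (Fin 2))
    (h : AffineIndependent ℝ ![A, B, C]) :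
    dist (tcenter (fun a b c => a^2) A B C) (tcenter (fun a b c => a) A B C) ≤ (9 - 6 * Real.sqrt 2) * dist (tcenter (fun a b c => a^2) A B C) (tcenter (fun a b c => (1:Real)) A B C) := by
  have hAB : A ≠ B := fun e => by
    have := h.injective.ne (show (0 : Fin 3) ≠ 1 by decide)
    simp [e] at this
  have hBC : B ≠ C := fun e => by
    have := h.injective.ne (show (1 : Fin 3) ≠ 2 by decide)
    simp [e] at this
  have hCA : C ≠ A := fun e => by
    have := h.injective.ne (show (2 : Fin 3) ≠ 0 by decide)
    simp [e] at this
  have ha := dist_pos.2 hBC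
  have hb := dist_pos.2 hCA
  have hc := dist_pos.2 hAB
  have t1 : dist A B ≤ dist B C + dist C A := by
    have := dist_triangle A C B
    rw [dist_comm A C, dist_comm C B] at this; linarith
  have t2 : dist B C ≤ dist C A + dist A B := by
    have := dist_triangle B A C
    rw [dist_comm B A, dist_comm A C] at this; linarith
  have t3 : dist C A ≤ dist A B + dist B C := by
    have := dist_triangle C B A
    rw [dist_comm C B, dist_comm B A] at this; linarith
  have hs : √2 ^ 2 = 2 := Real.sq_sqrt (by norm_num)
  have hsm : 0 ≤ 9 - 6 * √2 := by
    nlinarith [Real.sqrt_nonneg 2]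
  have main := aux_all _ _ _ ha hb hc t1 t2 t3
  refine (sq_le_sq₀ dist_nonneg (mul_nonneg hsm dist_nonneg)).1 ?_
  rw [mul_pow]
  simp only [tcenter]
  rw [aux_dist _ _ _ _ _ _ _ _ _ (by positivity) (by positivity),
    aux_dist _ _ _ _ _ _ _ _ _ (by positivity) (by positivity)]
  have hk : (9 - 6 * √2)^2 = 9 * (17 - 12 * √2) := by linear_combination 36 * hs
  rw [hk]
  generalize 17 - 12 * √2 = k at *
  generalize dist B C = a at *
  generalize dist C A = b at *
  generalize dist A B = c at *
  have hp : 0 < a + b + c := by positivity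
  have hq : 0 < a^2 + b^2 + c^2 := by positivity
  rw [← sub_nonneg]
  have e : ∀ L R : ℝ, L = (a*b*c) * (2*(a^2+b^2+c^2)*(a*b+b*c+c*a) - (a^2+b^2+c^2)^2 - 3*(a*b*c)*(a+b+c)) / ((a+b+c) * (a^2+b^2+c^2)^2) →
      R = k * (a+b+c) * (6*(a^2+b^2+c^2)*(a^2*b^2+b^2*c^2+c^2*a^2)
      - (a^2+b^2+c^2)^3-27*(a*b*c)^2) / ((a+b+c) * (a^2+b^2+c^2)^2) → 0 ≤ R - L := by
    intro L R hL hR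
    rw [hL, hR, sub_nonneg]
    exact div_le_div_of_nonneg_right main (by positivity)
  apply e
  · field_simp
    ring
  · field_simp
    ring
end

section
/- In any nondegenerate triangle, the distance from the Gergonne point X7 to the incenter X1 satisfies dist(X7, X1) ≤ (2/17)·(5 − 2√2)·dist(X7, X3), where X3 is the circumcenter. -/
lemma aux_w (k w : ℝ) (hk : 17 * k ^ 2 - 20 * k + 4 = 0) (hk1 : k < 1) :
    1 - w ^ 2 ≤ k * (4 - w - w ^ 2) := by
  have h1 : 0 < 1 - k := by linarith
  have h2 : 0 ≤ (2 * (1 - k) * w - k) ^ 2 := sq_nonneg _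
  have h3 : 0 ≤ (1 - k) * ((1 - k) * w ^ 2 - k * w + 4 * k - 1) := by nlinarith
  have := nonneg_of_mul_nonneg_right h3 h1
  linarith

lemma aux_interp (α β s s0 s1 : ℝ) (h0 : s0 ≤ s) (h1 : s ≤ s1)
    (g0 : 0 ≤ α + β * s0) (g1 : 0 ≤ α + β * s1) : 0 ≤ α + β * s := by
  rcases le_total 0 β with hb | hb
  · nlinarith
  · nlinarith

lemma aux_rs (k ρ σ : ℝ) (hk : 17 * k ^ 2 - 20 * k + 4 = 0) (hk1 : k < 1)
    (hρ : 2 ≤ ρ) (hf : (σ - (2 * ρ ^ 2 + 10 * ρ - 1)) ^ 2 ≤ 4 * ρ * (ρ - 2) ^ 3)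
    (hσ : 3 * σ ≤ (4 * ρ + 1) ^ 2) :
    (4 * ρ + 1) ^ 2 - 3 * σ ≤ k ^ 2 * (ρ ^ 2 * (4 * ρ + 1) ^ 2 - 4 * σ * (ρ + 1)) := by
  have hρ0 : 0 < ρ := by linarith
  obtain ⟨w, hw0, hw⟩ : ∃ w : ℝ, 0 ≤ w ∧ w ^ 2 = 1 - 2 / ρ := by
    refine ⟨Real.sqrt (1 - 2 / ρ), Real.sqrt_nonneg _, Real.sq_sqrt ?_⟩
    have : 2 / ρ ≤ 1 := by rw [div_le_one hρ0]; exact hρ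
    linarith
  have hu : ρ * (1 - w ^ 2) = 2 := by rw [hw]; field_simp; ring
  have hw2 : ρ * w ^ 2 = ρ - 2 := by linarith
  have hu0 : 0 < 1 - w ^ 2 := by
    by_contra hc
    push Not at hc
    nlinarith
  have hw1 : w < 1 := by nlinarith
  have hlow : 2 * ρ ^ 2 + 10 * ρ - 1 - 2 * ρ ^ 2 * w ^ 3 ≤ σ := by
    have h1 : (σ - (2 * ρ ^ 2 + 10 * ρ - 1)) ^ 2 ≤ (2 * ρ ^ 2 * w ^ 3) ^ 2 := by
      refine hf.trans (le_of_eq ?_)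
      rw [← hw2]; ring
    have h2 := abs_le_of_sq_le_sq' h1 (by positivity)
    linarith [h2.1]
  have g1 : 0 ≤ (k ^ 2 * (ρ ^ 2 * (4 * ρ + 1) ^ 2) - (4 * ρ + 1) ^ 2)
      + (3 - 4 * k ^ 2 * (ρ + 1)) * ((4 * ρ + 1) ^ 2 / 3) := by
    have : 0 ≤ k ^ 2 * (4 * ρ + 1) ^ 2 * ((ρ - 2) * (ρ + 2 / 3)) := by
      have : 0 ≤ ρ - 2 := by linarith
      positivity
    nlinarith
  have g0 : 0 ≤ (k ^ 2 * (ρ ^ 2 * (4 * ρ + 1) ^ 2) - (4 * ρ + 1) ^ 2)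
      + (3 - 4 * k ^ 2 * (ρ + 1)) * (2 * ρ ^ 2 + 10 * ρ - 1 - 2 * ρ ^ 2 * w ^ 3) := by
    have hkw := aux_w k w hk hk1
    have hsq : (1 - w ^ 2) ^ 2 ≤ (k * (4 - w - w ^ 2)) ^ 2 :=
      pow_le_pow_left₀ hu0.le hkw 2
    have hρe : ρ = 2 / (1 - w ^ 2) := by field_simp; linarith
    have key : (k ^ 2 * (ρ ^ 2 * (4 * ρ + 1) ^ 2) - (4 * ρ + 1) ^ 2)
      + (3 - 4 * k ^ 2 * (ρ + 1)) * (2 * ρ ^ 2 + 10 * ρ - 1 - 2 * ρ ^ 2 * w ^ 3)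
      = 4 * (3 + w) ^ 2 * w ^ 2 / (1 - w ^ 2) ^ 4 *
        ((k * (4 - w - w ^ 2)) ^ 2 - (1 - w ^ 2) ^ 2) := by
      rw [hρe]; field_simp; ring
    rw [key]
    exact mul_nonneg (by positivity) (by linarith)
  have := aux_interp _ _ σ _ _ hlow (by linarith : σ ≤ (4 * ρ + 1) ^ 2 / 3) g0 g1
  linarith

lemma aux_xyz (k x y z : ℝ) (hk : 17 * k ^ 2 - 20 * k + 4 = 0) (hk1 : k < 1)
    (hx : 0 < x) (hy : 0 < y) (hz : 0 < z) (e1 e2 e3 : ℝ)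
    (h1 : e1 = x + y + z) (h2 : e2 = x * y + y * z + z * x) (h3 : e3 = x * y * z) :
    e3 / e1 * (1 - 3 * e1 * e3 / e2 ^ 2) ≤
      k ^ 2 * ((e1 * e2 - e3) ^ 2 / (16 * e1 * e3) - e3 * (e1 * e2 + 3 * e3) / e2 ^ 2) := by
  have p1 : 0 < e1 := by rw [h1]; positivity
  have p2 : 0 < e2 := by rw [h2]; positivity
  have p3 : 0 < e3 := by rw [h3]; positivity
  have hd : 0 ≤ e1 ^ 2 * e2 ^ 2 - 4 * e2 ^ 3 - 4 * e1 ^ 3 * e3 + 18 * e1 * e2 * e3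
      - 27 * e3 ^ 2 := by
    have : e1 ^ 2 * e2 ^ 2 - 4 * e2 ^ 3 - 4 * e1 ^ 3 * e3 + 18 * e1 * e2 * e3
      - 27 * e3 ^ 2 = ((x - y) * (y - z) * (z - x)) ^ 2 := by rw [h1, h2, h3]; ring
    rw [this]; positivity
  have h9 : 9 * e3 ≤ e1 * e2 := by
    have : e1 * e2 - 9 * e3 = x * (y - z) ^ 2 + y * (z - x) ^ 2 + z * (x - y) ^ 2 := by
      rw [h1, h2, h3]; ring
    have : 0 ≤ x * (y - z) ^ 2 + y * (z - x) ^ 2 + z * (x - y) ^ 2 := by positivity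
    linarith
  have h33 : 3 * e1 * e3 ≤ e2 ^ 2 := by
    rw [h1, h2, h3]
    nlinarith [sq_nonneg (x * y - y * z), sq_nonneg (y * z - z * x), sq_nonneg (z * x - x * y)]
  obtain ⟨ρ, hρ⟩ : ∃ ρ, ρ = (e1 * e2 / e3 - 1) / 4 := ⟨_, rfl⟩
  obtain ⟨σ, hσ⟩ : ∃ σ, σ = e1 ^ 3 / e3 := ⟨_, rfl⟩
  have m := aux_rs k ρ σ hk hk1 ?_ ?_ ?_
  · have c : 0 < e3 / e1 / (4 * ρ + 1) ^ 2 := by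
      have : 4 * ρ + 1 = e1 * e2 / e3 := by rw [hρ]; ring
      rw [this]; positivity
    have m2 := mul_le_mul_of_nonneg_left m c.le
    have q : 4 * ρ + 1 = e1 * e2 / e3 := by rw [hρ]; ring
    refine (le_of_eq ?_).trans (m2.trans (le_of_eq ?_))
    · rw [q, hσ]; field_simp
    · rw [q, hσ, hρ]; field_simp; ring
  · have : 9 ≤ e1 * e2 / e3 := by rw [le_div_iff₀ p3]; exact h9
    rw [hρ]; linarith
  · have : 4 * ρ * (ρ - 2) ^ 3 - (σ - (2 * ρ ^ 2 + 10 * ρ - 1)) ^ 2 =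
      (e1 ^ 2 * e2 ^ 2 - 4 * e2 ^ 3 - 4 * e1 ^ 3 * e3 + 18 * e1 * e2 * e3
      - 27 * e3 ^ 2) * (e1 ^ 3 / (4 * e3 ^ 3)) := by
      rw [hρ, hσ]; field_simp; ring
    have := mul_nonneg hd (by positivity : 0 ≤ e1 ^ 3 / (4 * e3 ^ 3))
    linarith
  · have q : 4 * ρ + 1 = e1 * e2 / e3 := by rw [hρ]; ring
    rw [q, hσ]
    have : (e1 * e2 / e3) ^ 2 - 3 * (e1 ^ 3 / e3) = (e1 / e3) ^ 2 * (e2 ^ 2 - 3 * e1 * e3) := by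
      field_simp
    have := mul_nonneg (sq_nonneg (e1 / e3)) (by linarith : 0 ≤ e2 ^ 2 - 3 * e1 * e3)
    linarith

lemma aux_dist_s18 (A B C : EuclideanSpace ℝ (Fin 2)) (p q r pp qp rp : ℝ)
    (h : p + q + r ≠ 0) (hp : pp + qp + rp ≠ 0) :
    dist (bary A B C p q r) (bary A B C pp qp rp) ^ 2 =
      -(dist B C ^ 2 * ((q / (p + q + r) - qp / (pp + qp + rp)) *
          (r / (p + q + r) - rp / (pp + qp + rp)))
        + dist C A ^ 2 * ((r / (p + q + r) - rp / (pp + qp + rp)) *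
          (p / (p + q + r) - pp / (pp + qp + rp)))
        + dist A B ^ 2 * ((p / (p + q + r) - pp / (pp + qp + rp)) *
          (q / (p + q + r) - qp / (pp + qp + rp)))) := by
  obtain ⟨s, hs⟩ : ∃ s, s = p + q + r := ⟨_, rfl⟩
  obtain ⟨sp, hsp⟩ : ∃ sp, sp = pp + qp + rp := ⟨_, rfl⟩
  have e1 : r / s - rp / sp = -(p / s - pp / sp) - (q / s - qp / sp) := by
    have : r = s - p - q := by linarith
    have : rp = sp - pp - qp := by linarith
    rw [← hs] at h
    rw [← hsp] at hp
    subst r rp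
    field_simp
    ring
  simp only [bary, EuclideanSpace.dist_eq, ← hs, ← hsp]
  rw [Real.sq_sqrt (by positivity), Real.sq_sqrt (by positivity), Real.sq_sqrt (by positivity),
    Real.sq_sqrt (by positivity)]
  simp only [Fin.sum_univ_two, Real.dist_eq, sq_abs, PiLp.smul_apply, PiLp.add_apply, smul_eq_mul]
  have e2 : ∀ t : Fin 2, s⁻¹ * (p * A t + q * B t + r * C t) - sp⁻¹ * (pp * A t + qp * B t + rp * C t)
    = (p / s - pp / sp) * (A t) + (q / s - qp / sp) * (B t) + (r / s - rp / sp) * C t := by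
    intro t; ring
  rw [e2, e2, e1]
  ring

lemma aux_tri (A B C : EuclideanSpace ℝ (Fin 2))
    (h : AffineIndependent ℝ ![A, B, C]) : dist A C < dist A B + dist B C := by
  rw [affineIndependent_iff_not_collinear_set] at h
  refine lt_of_le_of_ne (dist_triangle _ _ _) fun he => h ?_
  exact (dist_add_dist_eq_iff.1 he.symm).collinear

theorem stmt_18 (A B C : EuclideanSpace ℝ (Fin 2))
    (h : AffineIndependent ℝ ![A, B, C]) :
    dist (tcenter (fun a b c => (a + b - c)*(a - b + c)) A B C) (tcenter (fun a b c => a) A B C) ≤ (2/17) * (5 - 2 * Real.sqrt 2) * dist (tcenter (fun a b c => (a + b - c)*(a - b + c)) A B C) (tcenter (fun a b c => a^2*(a^2 - b^2 - c^2)) A B C) := by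
  have t1 := aux_tri A B C h
  have t2 : dist B A < dist B C + dist C A := by
    apply aux_tri
    rw [affineIndependent_iff_not_collinear_set] at h ⊢
    convert h using 2
    ext t; simp; tauto
  have t3 : dist C B < dist C A + dist A B := by
    apply aux_tri
    rw [affineIndependent_iff_not_collinear_set] at h ⊢
    convert h using 2
    ext t; simp; tauto
  rw [dist_comm A C] at t1
  rw [dist_comm B A] at t2
  rw [dist_comm C B] at t3
  have hs2 : Real.sqrt 2 ^ 2 = 2 := Real.sq_sqrt (by norm_num)
  have hs0 : 0 ≤ Real.sqrt 2 := Real.sqrt_nonneg 2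
  obtain ⟨k, hkd⟩ : ∃ k, k = (2/17) * (5 - 2 * Real.sqrt 2) := ⟨_, rfl⟩
  have hk : 17 * k ^ 2 - 20 * k + 4 = 0 := by rw [hkd]; linear_combination (16 / 17) * hs2
  have hk1 : k < 1 := by rw [hkd]; linarith
  have hk0 : 0 ≤ k := by nlinarith
  rw [← hkd]
  refine le_of_sq_le_sq ?_ (mul_nonneg hk0 dist_nonneg)
  rw [mul_pow]
  obtain ⟨x, hx⟩ : ∃ x, x = (dist C A + dist A B - dist B C) / 2 := ⟨_, rfl⟩
  obtain ⟨y, hy⟩ : ∃ y, y = (dist A B + dist B C - dist C A) / 2 := ⟨_, rfl⟩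
  obtain ⟨z, hz⟩ : ∃ z, z = (dist B C + dist C A - dist A B) / 2 := ⟨_, rfl⟩
  have px : 0 < x := by linarith
  have py : 0 < y := by linarith
  have pz : 0 < z := by linarith
  have ha : dist B C = y + z := by linarith
  have hb : dist C A = z + x := by linarith
  have hc : dist A B = x + y := by linarith
  have key := aux_xyz k x y z hk hk1 px py pz _ _ _ rfl rfl rfl
  have n7 : ((y+z) + (z+x) - (x+y)) * ((y+z) - (z+x) + (x+y))
      + ((z+x) + (x+y) - (y+z)) * ((z+x) - (x+y) + (y+z))
      + ((x+y) + (y+z) - (z+x)) * ((x+y) - (y+z) + (z+x)) = 4 * (x * y + y * z + z * x) := by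
    ring
  have n1 : (y+z) + (z+x) + (x+y) = 2 * (x + y + z) := by ring
  have n3 : (y+z)^2 * ((y+z)^2 - (z+x)^2 - (x+y)^2)
      + (z+x)^2 * ((z+x)^2 - (x+y)^2 - (y+z)^2)
      + (x+y)^2 * ((x+y)^2 - (y+z)^2 - (z+x)^2) = -(16 * (x + y + z) * (x * y * z)) := by
    ring
  have q1 : 0 < x + y + z := by positivity
  have q2 : 0 < x * y + y * z + z * x := by positivity
  have q3 : 0 < x * y * z := by positivity
  simp only [tcenter, ha, hb, hc]
  rw [aux_dist_s18, aux_dist_s18, ha, hb, hc, n7, n1, n3]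
  · refine (le_of_eq ?_).trans (key.trans (le_of_eq ?_))
    · field_simp
      ring
    · congr 1
      field_simp
      ring
  · rw [n7]; positivity
  · rw [n3]; exact neg_ne_zero.2 (by positivity)
  · rw [n7]; positivity
  · rw [n1]; positivity
end
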